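/- arXiv:2505.00412 — 5 statements merged into one kernel-verified Lean document; each statement's English description precedes it below -/
import Mathlib

section
/- Let d ≥ 6 be an integer, G a graph, u ∈ V(G), and let Q1, Q2 ⊆ N^{≥d}_G(u) be nonempty vertex sets. If the distance between Q1 and Q2 in the induced subgraph G[N^{≥4}_G(u)] is at least d (in particular, if there is no path between them in this induced subgraph), then d_G(Q1,Q2) ≥ d. -/
open SimpleGraph

/-- Let `d ≥ 6`, `u ∈ V(G)`, and let `Q₁, Q₂ ⊆ N^{≥d}_G(u)` be nonempty. If the distance
between `Q₁` and `Q₂` in the induced subgraph `G[N^{≥4}_G(u)]` is at least `d` (this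
includes the case where there is no path between them in this induced subgraph, the
distance then being `∞`), then `d_G(Q₁,Q₂) ≥ d`, i.e. every vertex of `Q₁` is at distance
at least `d` in `G` from every vertex of `Q₂`. -/
theorem stmt5 {V : Type*} [Fintype V] (d : ℕ) (hd : 6 ≤ d) (G : SimpleGraph V) (u : V)
    (Q1 Q2 : Set V) (hQ1ne : Q1.Nonempty) (hQ2ne : Q2.Nonempty)
    (hQ1 : Q1 ⊆ {v : V | (d : ℕ∞) ≤ G.edist u v})
    (hQ2 : Q2 ⊆ {v : V | (d : ℕ∞) ≤ G.edist u v})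
    (hfar : ∀ x y : {v : V | 4 ≤ G.edist u v},
      (↑x : V) ∈ Q1 → (↑y : V) ∈ Q2 →
        (d : ℕ∞) ≤ (G.induce {v : V | 4 ≤ G.edist u v}).edist x y) :
    ∀ x ∈ Q1, ∀ y ∈ Q2, (d : ℕ∞) ≤ G.edist x y := by
  intro x hx y hy
  by_contra hlt
  push Not at hlt
  have hne : G.edist x y ≠ ⊤ := ne_top_of_lt hlt
  obtain ⟨p, hp⟩ := exists_walk_of_edist_ne_top hne
  rw [← hp] at hlt
  have hlt' : p.length < d := by exact_mod_cast hlt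
  have hall : ∀ w ∈ p.support, w ∈ {v : V | 4 ≤ G.edist u v} := by
    classical
    intro w hw
    by_contra hw4
    simp only [Set.mem_ofPred_eq, not_le] at hw4
    obtain ⟨q, hq⟩ := exists_walk_of_edist_ne_top (ne_top_of_lt hw4)
    rw [← hq] at hw4
    have hq4 : q.length < 4 := by exact_mod_cast hw4
    have h1 : (d : ℕ∞) ≤ ((q.append (p.takeUntil w hw).reverse).length : ℕ∞) :=
      le_trans (hQ1 hx) (edist_le _)
    have h2 : (d : ℕ∞) ≤ ((q.append (p.dropUntil w hw)).length : ℕ∞) :=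
      le_trans (hQ2 hy) (edist_le _)
    have h3 := congrArg Walk.length (p.take_spec hw)
    rw [Nat.cast_le] at h1 h2
    simp only [Walk.length_append, Walk.length_reverse] at h1 h2 h3
    omega
  have h := hfar ⟨x, hall x p.start_mem_support⟩ ⟨y, hall y p.end_mem_support⟩ hx hy
  have h2 := h.trans (edist_le (p.induce _ hall))
  rw [Nat.cast_le] at h2
  have h3 : (p.induce _ hall).length = p.length := by
    rw [← Walk.length_map (Embedding.induce _).toHom, Walk.map_induce]
    rfl
  omega
end

section
/- Let d ≥ 2 be an integer, G a graph, u ∈ V(G), and C ⊆ N^{≥d}_G(u). If G[C] is P3-free and the connected components of G[C] are pairwise at distance at least d in G, then G[C ∪ {u}] is P3-free and the connected components of G[C ∪ {u}] are pairwise at distance at least d in G. -/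
open SimpleGraph

/-- The connected components of `G[S]` are pairwise at distance at least `d` in `G`. -/
def CompsFar {V : Type*} (G : SimpleGraph V) (d : ℕ) (S : Set V) : Prop :=
  ∀ x y : S, ¬ (G.induce S).Reachable x y → (d : ℕ∞) ≤ G.edist x y

/-- Let `d ≥ 2`, `u ∈ V(G)` and `C ⊆ N^{≥d}_G(u)`. If `G[C]` is `P₃`-free and its
connected components are pairwise at distance at least `d` in `G`, then `G[C ∪ {u}]` is
`P₃`-free and its connected components are pairwise at distance at least `d` in `G`. -/
theorem stmt12 {V : Type*} [Fintype V] (d : ℕ) (hd : 2 ≤ d) (G : SimpleGraph V)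
    (u : V) (C : Set V) (hC : C ⊆ {v : V | (d : ℕ∞) ≤ G.edist u v})
    (hP3 : IsEmpty (pathGraph 3 ↪g G.induce C))
    (hfar : CompsFar G d C) :
    IsEmpty (pathGraph 3 ↪g G.induce (insert u C)) ∧
      CompsFar G d (insert u C) := by
  have hnadj : ∀ v, v ∈ insert u C → ¬ G.Adj u v := by
    intro v hv hadj
    rcases hv with rfl | hv
    · exact G.loopless.irrefl _ hadj
    · have h1 : (d : ℕ∞) ≤ G.edist u v := hC hv
      rw [SimpleGraph.edist_eq_one_iff_adj.2 hadj] at h1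
      have h2 : d ≤ 1 := by exact_mod_cast h1
      omega
  refine ⟨⟨fun f => ?_⟩, ?_⟩
  · have key : ∀ i j : Fin 3, (pathGraph 3).Adj i j → (f i : V) ∈ C := by
      intro i j hij
      have hadj : G.Adj (f i : V) (f j : V) := f.map_rel_iff.2 hij
      rcases (f i).2 with h | h
      · rw [h] at hadj
        exact absurd hadj (hnadj _ (f j).2)
      · exact h
    have hmem : ∀ i : Fin 3, (f i : V) ∈ C := by
      intro i
      fin_cases i
      · exact key 0 1 (by simp [pathGraph_adj])
      · exact key 1 2 (by simp [pathGraph_adj])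
      · exact key 2 1 (by simp [pathGraph_adj])
    refine hP3.false ⟨⟨fun i => ⟨f i, hmem i⟩, ?_⟩, ?_⟩
    · intro i j hij
      exact f.injective (Subtype.ext (Subtype.mk.inj hij))
    · intro i j
      exact f.map_rel_iff (a := i) (b := j)
  · rintro ⟨x, hx⟩ ⟨y, hy⟩ hxy
    rcases hx with rfl | hx
    · rcases hy with rfl | hy
      · exact absurd (Reachable.refl _) hxy
      · exact hC hy
    · rcases hy with rfl | hy
      · rw [SimpleGraph.edist_comm]
        exact hC hx
      · refine hfar ⟨x, hx⟩ ⟨y, hy⟩ fun h => hxy ?_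
        exact h.map (SimpleGraph.induceHomOfLE G (Set.subset_insert u C)).toHom
end

section
/- Let d ≥ 6 be an integer, G a graph, u ∈ V(G), and C ⊆ N^{≥d}_G(u). If G[C] is P3-free and the connected components of G[C] are pairwise at distance at least d in the induced subgraph G[N^{≥4}_G(u)], then G[C ∪ {u}] is P3-free and the connected components of G[C ∪ {u}] are pairwise at distance at least d in G. -/
open SimpleGraph

/-- Let `d ≥ 6`, `u ∈ V(G)` and `C ⊆ N^{≥d}_G(u)`. If `G[C]` is `P₃`-free and its
connected components are pairwise at distance at least `d` in the induced subgraph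
`G[N^{≥4}_G(u)]`, then `G[C ∪ {u}]` is `P₃`-free and its connected components are
pairwise at distance at least `d` in `G`. -/
theorem stmt13 {V : Type*} [Fintype V] (d : ℕ) (hd : 6 ≤ d) (G : SimpleGraph V)
    (u : V) (C : Set V) (hC : C ⊆ {v : V | (d : ℕ∞) ≤ G.edist u v})
    (hP3 : IsEmpty (pathGraph 3 ↪g G.induce C))
    (hfar : ∀ x y : C, ¬ (G.induce C).Reachable x y →
      ∀ x' y' : {v : V | 4 ≤ G.edist u v}, (↑x' : V) = ↑x → (↑y' : V) = ↑y →
        (d : ℕ∞) ≤ (G.induce {v : V | 4 ≤ G.edist u v}).edist x' y') :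
    IsEmpty (pathGraph 3 ↪g G.induce (insert u C)) ∧
      CompsFar G d (insert u C) := by
  have key : ∀ v ∈ C, ¬ G.Adj u v := by
    intro v hv ha
    have h1 : (d : ℕ∞) ≤ G.edist u v := hC hv
    rw [SimpleGraph.edist_eq_one_iff_adj.2 ha] at h1
    have : d ≤ 1 := by exact_mod_cast h1
    omega
  constructor
  · refine ⟨fun f => ?_⟩
    have hadj : ∀ a b, (pathGraph 3).Adj a b → G.Adj (f a : V) (f b : V) := by
      intro a b h
      exact f.map_rel_iff.2 h
    have hne : ∀ a b, (pathGraph 3).Adj a b → (f a : V) ∈ C := by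
      intro a b h
      have h2 := hadj a b h
      rcases (f a).2 with h1 | h1
      · rcases (f b).2 with h3 | h3
        · rw [h1, h3] at h2
          exact absurd h2 (G.loopless.irrefl u)
        · rw [h1] at h2
          exact absurd h2 (key _ h3)
      · exact h1
    have hmem : ∀ a, (f a : V) ∈ C := by
      intro a
      fin_cases a
      · exact hne 0 1 (by simp [pathGraph_adj])
      · exact hne 1 0 (by simp [pathGraph_adj])
      · exact hne 2 1 (by simp [pathGraph_adj])
    refine hP3.false ⟨⟨fun a => ⟨f a, hmem a⟩, ?_⟩, ?_⟩
    · intro a b h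
      apply f.injective
      apply Subtype.ext
      exact congrArg (fun z : C => (z : V)) h
    · intro a b
      exact f.map_rel_iff
  · rintro ⟨x, hx⟩ ⟨y, hy⟩ hr
    rcases hx with rfl | hx
    · rcases hy with rfl | hy
      · exact absurd (Reachable.refl _) hr
      · exact hC hy
    · rcases hy with rfl | hy
      · rw [SimpleGraph.edist_comm]
        exact hC hx
      · have hr' : ¬ (G.induce C).Reachable ⟨x, hx⟩ ⟨y, hy⟩ := fun h =>
          hr (h.map (G.induceHomOfLE (Set.subset_insert u C)).toHom)
        by_contra hlt
        rw [not_le] at hlt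
        have hlt' : G.edist x y < d := hlt
        obtain ⟨p, hp⟩ := SimpleGraph.exists_walk_of_edist_ne_top (ne_top_of_lt hlt')
        rw [← hp] at hlt'
        have hlen : p.length < d := by exact_mod_cast hlt'
        have hsup : ∀ w ∈ p.support, w ∈ {v : V | 4 ≤ G.edist u v} := by
          classical
          intro w hw
          by_contra hw4
          have hw4' : G.edist u w < 4 := not_le.1 hw4
          obtain ⟨q, hq⟩ := SimpleGraph.exists_walk_of_edist_ne_top (ne_top_of_lt hw4')
          rw [← hq] at hw4'
          have hq4 : q.length < 4 := by exact_mod_cast hw4'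
          have h1 : (d : ℕ∞) ≤ ((q.append (p.takeUntil w hw).reverse).length : ℕ∞) :=
            le_trans (hC hx) (Walk.edist_le _)
          have h2 : (d : ℕ∞) ≤ ((q.append (p.dropUntil w hw)).length : ℕ∞) :=
            le_trans (hC hy) (Walk.edist_le _)
          have h3 := congrArg Walk.length (p.take_spec hw)
          rw [Walk.length_append] at h1 h2 h3
          rw [Walk.length_reverse] at h1
          have h1n := Nat.cast_le.1 h1
          have h2n := Nat.cast_le.1 h2
          omega
        have h := hfar ⟨x, hx⟩ ⟨y, hy⟩ hr' ⟨x, hsup x p.start_mem_support⟩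
          ⟨y, hsup y p.end_mem_support⟩ rfl rfl
        have h2 := h.trans (Walk.edist_le (p.induce _ hsup))
        have h3 : (p.induce _ hsup).length = p.length := by
          rw [← Walk.length_map (Embedding.induce _).toHom, Walk.map_induce]
          rfl
        rw [h3] at h2
        have : d ≤ p.length := by exact_mod_cast h2
        omega
end

section
/- Let r ≥ 1 be an integer, G a graph with nonnegative weight function w : V(G) → ℚ, L an r-list assignment of G, and 𝒮 a nonempty family of subsets of V(G) such that every maximal independent set of G is contained in some member of 𝒮. Then the maximum of ∑_{v∈F} w(v) over all F ⊆ V(G) such that G[F] admits a proper coloring respecting L equals the maximum, over r-tuples (S_1,…,S_r) ∈ 𝒮^r, of the maximum of ∑_{v∈F} w(v) over all F ⊆ S_1 ∪ … ∪ S_r for which G[F] admits a proper coloring φ respecting L with φ^{-1}(i) ⊆ S_i for every i ∈ {1,…,r}. -/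
open SimpleGraph

/-- `φ` is a proper colouring of `G[F]` respecting the `r`-list assignment `L`:
adjacent vertices of `F` get different colours, and each vertex `v ∈ F` gets a colour
from its list `L v`. -/
def RespectsL {V : Type*} (G : SimpleGraph V) (r : ℕ) (L : V → Set (Fin r))
    (F : Finset V) (φ : {x : V // x ∈ F} → Fin r) : Prop :=
  (∀ a b : {x : V // x ∈ F}, G.Adj ↑a ↑b → φ a ≠ φ b) ∧ (∀ v : {x : V // x ∈ F}, φ v ∈ L ↑v)

/-- Let `r ≥ 1`, `w` a nonnegative weight function, `L` an `r`-list assignment of `G`,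
and `𝒮` a nonempty family of vertex subsets such that every maximal independent set of
`G` is contained in some member of `𝒮`. Then the maximum of `∑_{v ∈ F} w v` over all
`F ⊆ V(G)` such that `G[F]` admits a proper colouring respecting `L` equals the maximum,
over `r`-tuples `(S 1, …, S r) ∈ 𝒮^r`, of the maximum of `∑_{v ∈ F} w v` over all
`F ⊆ S 1 ∪ … ∪ S r` for which `G[F]` has a proper colouring `φ` respecting `L` with
`φ⁻¹(i) ⊆ S i` for every `i`. -/
theorem stmt14 {V : Type*} [Fintype V] (r : ℕ) (hr : 1 ≤ r) (G : SimpleGraph V)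
    (w : V → ℚ) (hw : ∀ v, 0 ≤ w v) (L : V → Set (Fin r))
    (𝒮 : Set (Set V)) (h𝒮ne : 𝒮.Nonempty)
    (h𝒮 : ∀ I : Set V, I.Pairwise (fun u v => ¬ G.Adj u v) →
      (∀ J : Set V, J.Pairwise (fun u v => ¬ G.Adj u v) → I ⊆ J → J = I) →
      ∃ S ∈ 𝒮, I ⊆ S)
    (M : ℚ) :
    IsGreatest {m : ℚ | ∃ F : Finset V,
        (∃ φ : {x : V // x ∈ F} → Fin r, RespectsL G r L F φ) ∧ ∑ v ∈ F, w v = m} M ↔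
      IsGreatest {m : ℚ | ∃ S : Fin r → Set V, (∀ i, S i ∈ 𝒮) ∧
        ∃ F : Finset V, ↑F ⊆ ⋃ i, S i ∧
          (∃ φ : {x : V // x ∈ F} → Fin r, RespectsL G r L F φ ∧
            ∀ (v : {x : V // x ∈ F}) (i : Fin r), φ v = i → (↑v : V) ∈ S i) ∧
          ∑ v ∈ F, w v = m} M := by
  have key : ∀ I : Set V, I.Pairwise (fun u v => ¬ G.Adj u v) → ∃ S ∈ 𝒮, I ⊆ S := by
    intro I hI
    obtain ⟨K, hIK, hK⟩ := Set.Finite.exists_le_maximal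
      (s := {J : Set V | J.Pairwise (fun u v => ¬ G.Adj u v)}) (Set.toFinite _) hI
    obtain ⟨S, hS, hKS⟩ := h𝒮 K hK.prop
      (fun J hJ hKJ => Set.Subset.antisymm (hK.le_of_ge hJ hKJ) hKJ)
    exact ⟨S, hS, Set.Subset.trans hIK hKS⟩
  apply iff_of_eq
  congr 1
  ext m
  constructor
  · rintro ⟨F, ⟨φ, hφ⟩, hm⟩
    have h : ∀ i : Fin r, ∃ S ∈ 𝒮, {x : V | ∃ hx : x ∈ F, φ ⟨x, hx⟩ = i} ⊆ S := by
      intro i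
      apply key
      rintro u ⟨hu, hui⟩ v ⟨hv, hvi⟩ _ hadj
      exact hφ.1 ⟨u, hu⟩ ⟨v, hv⟩ hadj (hui.trans hvi.symm)
    choose S hS hsub using h
    refine ⟨S, hS, F, ?_, ⟨φ, hφ, ?_⟩, hm⟩
    · intro x hx
      exact Set.mem_iUnion.2 ⟨φ ⟨x, hx⟩, hsub _ ⟨hx, rfl⟩⟩
    · rintro ⟨v, hv⟩ i hi
      exact hsub i ⟨hv, hi⟩
  · rintro ⟨S, hS, F, _, ⟨φ, hφ, _⟩, hm⟩
    exact ⟨F, ⟨φ, hφ⟩, hm⟩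
end

section
/- Let d ≥ 2 and r ≥ 1 be integers, G a graph, L an r-list assignment of G, and 𝒮 a nonempty distance-d amiable family of G. Then G admits a (d,r)-coloring φ : V(G) → {1,…,r} with φ(v) ∈ L(v) for every vertex v if and only if there exist an r-tuple (S_1,…,S_r) ∈ 𝒮^r and a map φ : V(G) → {1,…,r} such that φ(v) ∈ L(v) for every vertex v, φ^{-1}(i) ⊆ S_i for every i ∈ {1,…,r}, and for each i every connected component of G[S_i] contains at most one vertex of φ^{-1}(i). -/
open SimpleGraph

/-- `X` is a distance-`d` independent set of `G`: its vertices are pairwise at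
distance at least `d` in `G`. -/
def DistIndep {V : Type*} (G : SimpleGraph V) (d : ℕ) (X : Set V) : Prop :=
  X.Pairwise fun u v => (d : ℕ∞) ≤ G.edist u v

/-- `𝒮` is a distance-`d` amiable family of `G`: each member induces a `P₃`-free
subgraph whose connected components are pairwise at distance at least `d` in `G`, and
every maximal distance-`d` independent set of `G` is contained in some member. -/
def DistAmiable {V : Type*} (G : SimpleGraph V) (d : ℕ) (𝒮 : Set (Set V)) : Prop :=
  (∀ S ∈ 𝒮, IsEmpty (pathGraph 3 ↪g G.induce S)) ∧
  (∀ S ∈ 𝒮, CompsFar G d S) ∧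
  (∀ I : Set V, DistIndep G d I →
    (∀ J : Set V, DistIndep G d J → I ⊆ J → J = I) → ∃ S ∈ 𝒮, I ⊆ S)

/-- `φ` is a `(d,r)`-colouring of `G`: any two distinct vertices at distance less than
`d` in `G` receive different colours. -/
def IsDistColoring {V : Type*} (G : SimpleGraph V) (d : ℕ) (r : ℕ)
    (φ : V → Fin r) : Prop :=
  ∀ u v : V, u ≠ v → G.edist u v < (d : ℕ∞) → φ u ≠ φ v

theorem reach_of_p3free {W : Type*} (H : SimpleGraph W) (h : IsEmpty (pathGraph 3 ↪g H))
    {x y : W} (hxy : H.Reachable x y) : x = y ∨ H.Adj x y := by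
  obtain ⟨p⟩ := hxy
  induction p with
  | nil => exact Or.inl rfl
  | @cons u v w huv p ih =>
    rcases ih with rfl | hvw
    · exact Or.inr huv
    · by_contra! hcon
      obtain ⟨hne, hna⟩ := hcon
      have h1 := huv.ne
      have h2 := hvw.ne
      have hna' : ¬ H.Adj w u := fun h => hna h.symm
      refine h.false ⟨⟨![u, v, w], ?_⟩, ?_⟩
      · intro a b hab
        fin_cases a <;> fin_cases b <;> simp_all
      · intro a b
        change H.Adj (![u, v, w] a) (![u, v, w] b) ↔ _
        fin_cases a <;> fin_cases b <;>
          simp [pathGraph_adj, huv, hvw, huv.symm, hvw.symm, hna, hna']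

/-- Let `d ≥ 2`, `r ≥ 1`, `L` an `r`-list assignment of `G` and `𝒮` a nonempty
distance-`d` amiable family of `G`. Then `G` has a `(d,r)`-colouring respecting `L` iff
there are an `r`-tuple `(S 1, …, S r) ∈ 𝒮^r` and a map `φ : V(G) → Fin r` respecting `L`
with `φ⁻¹(i) ⊆ S i` for every `i` and such that, for each `i`, every connected component
of `G[S i]` contains at most one vertex of `φ⁻¹(i)`. -/
theorem stmt15 {V : Type*} [Fintype V] (d r : ℕ) (hd : 2 ≤ d) (hr : 1 ≤ r)
    (G : SimpleGraph V) (L : V → Set (Fin r)) (𝒮 : Set (Set V))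
    (h𝒮ne : 𝒮.Nonempty) (h𝒮 : DistAmiable G d 𝒮) :
    (∃ φ : V → Fin r, IsDistColoring G d r φ ∧ ∀ v, φ v ∈ L v) ↔
      (∃ S : Fin r → Set V, (∀ i, S i ∈ 𝒮) ∧
        ∃ φ : V → Fin r, (∀ v, φ v ∈ L v) ∧
          (∀ (v : V) (i : Fin r), φ v = i → v ∈ S i) ∧
          (∀ i : Fin r, ∀ x y : S i, φ ↑x = i → φ ↑y = i →
            (G.induce (S i)).Reachable x y → x = y)) := by
  obtain ⟨hP, hF, hM⟩ := h𝒮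
  constructor
  · rintro ⟨φ, hφ, hL⟩
    have key : ∀ i : Fin r, ∃ S ∈ 𝒮, {v | φ v = i} ⊆ S := by
      intro i
      have hI : DistIndep G d {v | φ v = i} := by
        intro u hu v hv huv
        by_contra hlt
        exact hφ u v huv (not_le.mp hlt) (hu.trans hv.symm)
      obtain ⟨J, hIJ, hJ⟩ := (Set.toFinite {X : Set V | DistIndep G d X}).exists_le_maximal hI
      obtain ⟨S, hS, hJS⟩ := hM J hJ.prop
        (fun K hK hJK => Set.Subset.antisymm (hJ.le_of_ge hK hJK) hJK)
      exact ⟨S, hS, hIJ.trans hJS⟩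
    choose S hS hsub using key
    refine ⟨S, hS, φ, hL, fun v i hv => hsub i hv, ?_⟩
    intro i x y hx hy hr
    rcases reach_of_p3free _ (hP _ (hS i)) hr with h | h
    · exact h
    · exfalso
      have hadj : G.Adj x y := h
      refine hφ x y hadj.ne ?_ (hx.trans hy.symm)
      rw [edist_eq_one_iff_adj.mpr hadj]
      exact_mod_cast hd
  · rintro ⟨S, hS, φ, hL, hsub, huniq⟩
    refine ⟨φ, ?_, hL⟩
    intro u v huv hlt heq
    have hu := hsub u (φ v) heq
    have hv := hsub v (φ v) rfl
    by_cases hr : (G.induce (S (φ v))).Reachable ⟨u, hu⟩ ⟨v, hv⟩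
    · exact huv (congrArg Subtype.val (huniq _ _ _ heq rfl hr))
    · exact absurd (hF _ (hS _) ⟨u, hu⟩ ⟨v, hv⟩ hr) (not_le.mpr hlt)
end
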